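/- arXiv:1507.01519 — 3 statements merged into one kernel-verified Lean document; each statement's English description precedes it below -/
import Mathlib

section
/- Let ℓ = (ℓ_1, …, ℓ_n) be a generic n-tuple of positive real numbers, and let z_1, …, z_n be unit vectors in ℝ³ with ℓ_1 z_1 + ⋯ + ℓ_n z_n = 0. If g is a linear isometry of ℝ³ (equivalently, a 3×3 orthogonal matrix) with determinant 1 satisfying g z_i = z_i for all i, then g is the identity. In other words, the rotation group SO(3) acts freely on the spatial polygon configuration space when ℓ is generic. -/
/-- If `ℓ` is generic, `z 1, …, z n` are unit vectors in `ℝ³` with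
`∑ ℓ i • z i = 0`, and `g` is a linear isometry of `ℝ³` of determinant `1`
fixing every `z i`, then `g` is the identity (SO(3) acts freely). -/
theorem rotation_fixing_generic_polygon_is_id (n : ℕ) (ℓ : Fin n → ℝ)
    (hpos : ∀ i, 0 < ℓ i)
    (hgen : ¬ ∃ S : Finset (Fin n), ∑ i ∈ S, ℓ i = ∑ i ∈ Sᶜ, ℓ i)
    (z : Fin n → EuclideanSpace ℝ (Fin 3))
    (hunit : ∀ i, ‖z i‖ = 1) (hsum : ∑ i, ℓ i • z i = 0)
    (g : EuclideanSpace ℝ (Fin 3) ≃ₗᵢ[ℝ] EuclideanSpace ℝ (Fin 3))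
    (hdet : LinearMap.det (g.toLinearEquiv :
      EuclideanSpace ℝ (Fin 3) →ₗ[ℝ] EuclideanSpace ℝ (Fin 3)) = 1)
    (hfix : ∀ i, g (z i) = z i) :
    g = LinearIsometryEquiv.refl ℝ (EuclideanSpace ℝ (Fin 3)) := by
  classical
  have hn : 0 < n := by
    rcases Nat.eq_zero_or_pos n with h | h
    · subst h
      exact absurd ⟨∅, by simp⟩ hgen
    · exact h
  let i0 : Fin n := ⟨0, hn⟩
  have hz0 : z i0 ≠ 0 := by
    intro h
    have := hunit i0
    simp [h] at this
  -- there are two linearly independent directions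
  have hind : ∃ j, LinearIndependent ℝ ![z i0, z j] := by
    by_contra hcon
    push Not at hcon
    have hpm : ∀ j, z j = z i0 ∨ z j = -z i0 := by
      intro j
      have hj := hcon j
      rw [LinearIndependent.pair_iff' hz0] at hj
      push Not at hj
      obtain ⟨a, ha⟩ := hj
      have h1 : |a| = 1 := by
        have := hunit j
        rw [← ha, norm_smul, hunit i0, mul_one, Real.norm_eq_abs] at this
        exact this
      rcases (abs_eq zero_le_one).1 h1 with h | h
      · left; rw [← ha, h, one_smul]
      · right; rw [← ha, h, neg_one_smul]
    apply hgen
    refine ⟨Finset.univ.filter (fun i => z i = z i0), ?_⟩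
    set S := Finset.univ.filter (fun i => z i = z i0) with hS
    have h1 : ∑ i ∈ S, ℓ i • z i = (∑ i ∈ S, ℓ i) • z i0 := by
      rw [Finset.sum_smul]
      refine Finset.sum_congr rfl fun i hi => ?_
      rw [(Finset.mem_filter.1 hi).2]
    have h2 : ∑ i ∈ Sᶜ, ℓ i • z i = -((∑ i ∈ Sᶜ, ℓ i) • z i0) := by
      rw [Finset.sum_smul, ← Finset.sum_neg_distrib]
      refine Finset.sum_congr rfl fun i hi => ?_
      have hne : z i ≠ z i0 := by
        intro h
        exact (Finset.mem_compl.1 hi) (by simp [hS, h])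
      rw [(hpm i).resolve_left hne, smul_neg]
    rw [← Finset.sum_add_sum_compl S, h1, h2, ← sub_eq_add_neg, ← sub_smul] at hsum
    rcases smul_eq_zero.1 hsum with h | h
    · exact sub_eq_zero.1 h
    · exact absurd h hz0
  obtain ⟨j, hj⟩ := hind
  set K := (ContinuousLinearMap.id ℝ (EuclideanSpace ℝ (Fin 3)) - g).ker with hK
  have hle : Submodule.span ℝ (Set.range ![z i0, z j]) ≤ K := by
    rw [Submodule.span_le]
    rintro _ ⟨k, rfl⟩
    fin_cases k <;> simp [hK, hfix]
  have h2 : 2 ≤ Module.finrank ℝ K := by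
    have h := Submodule.finrank_mono hle
    rw [finrank_span_eq_card hj] at h
    simpa using h
  have h3 : Module.finrank ℝ Kᗮ ≤ 1 := by
    have h := K.finrank_add_finrank_orthogonal
    rw [finrank_euclideanSpace_fin] at h
    omega
  obtain ⟨l, hl, hg⟩ := g.reflections_generate_dim_aux h3
  match l, hl, hg with
  | [], _, hg => exact hg
  | [v], _, hg =>
    simp only [List.map_cons, List.map_nil, List.prod_cons, List.prod_nil, mul_one] at hg
    by_cases hv : v = 0
    · subst hv
      rw [hg]
      ext1 x
      simp [Submodule.reflection_mem_subspace_eq_self]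
    · exfalso
      rw [hg] at hdet
      have hd := (ℝ ∙ v)ᗮ.det_reflection
      rw [Submodule.orthogonal_orthogonal, finrank_span_singleton hv] at hd
      have h4 := hdet.symm.trans hd
      norm_num at h4
  | _ :: _ :: _, hl, _ => simp at hl
end

section
/- Let A be a commutative ring, let m ≥ r ≥ 0 be integers, and let R, V_1, …, V_r ∈ A satisfy: (i) V_j² = R·V_j for all j; (ii) R^e · ∏_{j ∈ T} V_j = 0 for every subset T ⊆ {1, …, r} and every integer e ≥ 0 with e + |T| > m; and (iii) R^{m − |T|} · ∏_{j ∈ T} V_j = 0 for every proper subset T ⊊ {1, …, r}. Then in the tensor product A ⊗_ℤ A, (R ⊗ 1 − 1 ⊗ R)^{2m − 2r} · ∏_{j=1}^{r} (V_j ⊗ 1 − 1 ⊗ V_j)² = (−1)^m · binom(2m − 2r, m − r) · 2^r · (R^{m − r} V_1 ⋯ V_r) ⊗ (R^{m − r} V_1 ⋯ V_r). -/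
open scoped TensorProduct

theorem aux_formula {A B : Type*} [CommRing A] [CommRing B] (L M : A →+* B)
    (m r : ℕ) (hrm : r ≤ m) (R : A) (V : Fin r → A)
    (h1 : ∀ j, V j ^ 2 = R * V j)
    (h2 : ∀ (T : Finset (Fin r)) (e : ℕ), m < e + T.card →
      R ^ e * ∏ j ∈ T, V j = 0)
    (h3 : ∀ T : Finset (Fin r), T ≠ Finset.univ →
      R ^ (m - T.card) * ∏ j ∈ T, V j = 0) :
    (L R - M R) ^ (2 * m - 2 * r) * ∏ j, (L (V j) - M (V j)) ^ 2 =
      (-1 : B) ^ m * ((2 * m - 2 * r).choose (m - r) : B) * (2 : B) ^ r *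
        (L (R ^ (m - r) * ∏ j, V j) * M (R ^ (m - r) * ∏ j, V j)) := by
  have h4 : ∀ (T : Finset (Fin r)) (e : ℕ), T ≠ Finset.univ → m ≤ e + T.card →
      R ^ e * ∏ j ∈ T, V j = 0 := by
    intro T e hT he
    rcases he.lt_or_eq with h | h
    · exact h2 T e h
    · have : e = m - T.card := by omega
      rw [this]; exact h3 T hT
  have hsq : ∀ j, (L (V j) - M (V j)) ^ 2 =
      (-2 * (L (V j) * M (V j))) + (L R * L (V j) + M R * M (V j)) := by
    intro j
    have ha : L (V j) ^ 2 = L R * L (V j) := by rw [← map_pow, h1, map_mul]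
    have hb : M (V j) ^ 2 = M R * M (V j) := by rw [← map_pow, h1, map_mul]
    rw [← ha, ← hb]; ring
  simp_rw [hsq]
  rw [Finset.prod_add, Finset.mul_sum, Finset.sum_eq_single Finset.univ]
  · -- main term
    rw [sub_eq_add_neg, add_pow, Finset.sum_mul, Finset.sum_eq_single (m - r)]
    · have e1 : 2 * m - 2 * r - (m - r) = m - r := by omega
      have e2 : (-1 : B) ^ m = (-1) ^ (m - r) * (-1) ^ r := by
        rw [← pow_add]; congr 1; omega
      rw [e1, e2]
      simp only [Finset.prod_mul_distrib, map_mul, map_pow, map_prod, sdiff_self,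
        Finset.prod_const, Finset.card_univ, Fintype.card_fin, Finset.bot_eq_empty,
        Finset.prod_empty, Finset.sdiff_self]
      rw [neg_pow (M R), neg_pow (2 : B)]
      ring
    · intro i hi hne
      have hi' := Finset.mem_range.1 hi
      have key : L (R ^ i * ∏ j, V j) * M (R ^ (2 * m - 2 * r - i) * ∏ j, V j) = 0 := by
        rcases lt_or_gt_of_ne hne with h | h
        · rw [h2 Finset.univ (2 * m - 2 * r - i) (by simp; omega)]; simp
        · rw [h2 Finset.univ i (by simp; omega)]; simp
      simp only [Finset.prod_mul_distrib, map_mul, map_pow, map_prod] at key ⊢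
      rw [neg_pow (M R)]
      simp only [Finset.sdiff_self, Finset.prod_empty]
      linear_combination ((-1) ^ (2 * m - 2 * r - i) * ((2 * m - 2 * r).choose i : B) *
        (∏ _j : Fin r, (-2 : B))) * key
    · intro h
      exact absurd (Finset.mem_range.2 (by omega)) h
  · intro S _ hS
    rw [Finset.prod_add, sub_eq_add_neg, add_pow, Finset.mul_sum, Finset.mul_sum]
    refine Finset.sum_eq_zero fun P hP => ?_
    rw [Finset.sum_mul]
    refine Finset.sum_eq_zero fun i hi => ?_
    have hi' := Finset.mem_range.1 hi
    rw [Finset.mem_powerset] at hP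
    set Q := (Finset.univ \ S) \ P with hQ
    have dP : Disjoint S P := by
      rw [Finset.disjoint_left]; intro a ha hb
      have := hP hb
      simp_all
    have dQ : Disjoint S Q := by
      rw [Finset.disjoint_left]; intro a ha hb
      simp_all
    have cQ : S.card + P.card + Q.card = r := by
      have a1 := Finset.card_sdiff_add_card_eq_card hP
      rw [← hQ] at a1
      have a2 := Finset.card_sdiff_add_card_eq_card (Finset.subset_univ S)
      rw [Finset.card_univ, Fintype.card_fin] at a2
      omega
    have cS : S.card < r := by
      have := Finset.card_lt_univ_of_notMem (s := S) (x := (by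
        exact Classical.choose (not_forall.1 (mt Finset.eq_univ_iff_forall.2 hS))))
        (Classical.choose_spec (not_forall.1 (mt Finset.eq_univ_iff_forall.2 hS)))
      simpa using this
    have cP : (S ∪ P).card = S.card + P.card := Finset.card_union_of_disjoint dP
    have cQ' : (S ∪ Q).card = S.card + Q.card := Finset.card_union_of_disjoint dQ
    have key : L (R ^ (i + P.card) * ∏ j ∈ S ∪ P, V j) *
        M (R ^ (2 * m - 2 * r - i + Q.card) * ∏ j ∈ S ∪ Q, V j) = 0 := by
      have nu : ∀ T : Finset (Fin r), T.card < r → T ≠ Finset.univ := by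
        rintro T hT rfl
        simp at hT
      rcases lt_trichotomy m (i + P.card + (S ∪ P).card) with h | h | h
      · rw [h2 _ _ h]; simp
      · by_cases hq : Q.card = 0
        · rw [h4 (S ∪ Q) _ (nu _ (by omega)) (by omega)]; simp
        · rw [h4 (S ∪ P) _ (nu _ (by omega)) (by omega)]; simp
      · rw [h2 (S ∪ Q) _ (by omega)]; simp
    rw [Finset.prod_union dP, Finset.prod_union dQ] at key
    simp only [Finset.prod_mul_distrib, map_mul, map_pow, map_prod, Finset.prod_const,
      pow_add] at key ⊢
    rw [neg_pow (M R)]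
    linear_combination ((-1) ^ (2 * m - 2 * r - i) * ((2 * m - 2 * r).choose i : B) *
        (-2 : B) ^ S.card) * key
  · intro h; exact absurd (Finset.mem_powerset.2 (Finset.Subset.refl _)) h

/-- the central tensor-product computation in the proof of the main
theorem: under the relations (i) `V j ^ 2 = R * V j`, (ii) vanishing of products
above degree `m`, and (iii) vanishing of `R ^ (m − |T|) * ∏_{j ∈ T} V j` for proper
subsets `T`, one has
`(R ⊗ 1 − 1 ⊗ R) ^ (2m − 2r) * ∏ j (V j ⊗ 1 − 1 ⊗ V j) ^ 2
  = (−1)^m * C(2m − 2r, m − r) * 2^r * (R^(m−r) V₁ ⋯ V_r) ⊗ (R^(m−r) V₁ ⋯ V_r)`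
in `A ⊗_ℤ A`. -/
theorem tensor_zero_divisor_product_formula (A : Type*) [CommRing A]
    (m r : ℕ) (hrm : r ≤ m) (R : A) (V : Fin r → A)
    (h1 : ∀ j, V j ^ 2 = R * V j)
    (h2 : ∀ (T : Finset (Fin r)) (e : ℕ), m < e + T.card →
      R ^ e * ∏ j ∈ T, V j = 0)
    (h3 : ∀ T : Finset (Fin r), T ≠ Finset.univ →
      R ^ (m - T.card) * ∏ j ∈ T, V j = 0) :
    (R ⊗ₜ[ℤ] (1 : A) - (1 : A) ⊗ₜ[ℤ] R) ^ (2 * m - 2 * r) *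
        ∏ j, (V j ⊗ₜ[ℤ] (1 : A) - (1 : A) ⊗ₜ[ℤ] V j) ^ 2 =
      (-1 : A ⊗[ℤ] A) ^ m * ((2 * m - 2 * r).choose (m - r) : A ⊗[ℤ] A) *
        (2 : A ⊗[ℤ] A) ^ r *
        ((R ^ (m - r) * ∏ j, V j) ⊗ₜ[ℤ] (R ^ (m - r) * ∏ j, V j)) := by
  have h := aux_formula (Algebra.TensorProduct.includeLeftRingHom : A →+* A ⊗[ℤ] A)
    (Algebra.TensorProduct.includeRight : A →ₐ[ℤ] A ⊗[ℤ] A).toRingHom m r hrm R V h1 h2 h3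
  simpa [Algebra.TensorProduct.tmul_mul_tmul, -map_mul, -map_pow, -map_prod] using h
end

section
/- Let A be a commutative ring whose underlying additive group is torsion-free, let m ≥ r ≥ 0 be integers, and let R, V_1, …, V_r ∈ A satisfy: (i) V_j² = R·V_j for all j; (ii) R^e · ∏_{j ∈ T} V_j = 0 for every subset T ⊆ {1, …, r} and every e ≥ 0 with e + |T| > m; (iii) R^{m − |T|} · ∏_{j ∈ T} V_j = 0 for every proper subset T ⊊ {1, …, r}; and (iv) R^{m − r} V_1 ⋯ V_r ≠ 0. Then there exist 2m elements y_1, …, y_{2m}, each equal to R or to one of the V_j (namely, 2m − 2r copies of R and two copies of each V_j), such that the product ∏_{i=1}^{2m} (y_i ⊗ 1 − 1 ⊗ y_i) is nonzero in A ⊗_ℤ A. -/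
open scoped TensorProduct

/-- Nonzero pure tensors stay nonzero over a torsion-free ring. -/
lemma tmul_ne_zero_aux (A : Type*) [CommRing A] [Module.IsTorsionFree ℤ A] (a b : A)
    (ha : a ≠ 0) (hb : b ≠ 0) : a ⊗ₜ[ℤ] b ≠ 0 := by
  intro h
  have hinj : Function.Injective (LinearMap.toSpanSingleton ℤ A b) := by
    intro x y hxy
    exact smul_left_injective ℤ hb (by simpa using hxy)
  have h2 := Module.Flat.lTensor_preserves_injective_linearMap (M := A) _ hinj
  have h3 : a ⊗ₜ[ℤ] (1 : ℤ) = 0 := by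
    apply h2
    simp [h]
  have h4 := congrArg (TensorProduct.rid ℤ A) h3
  simp at h4
  exact ha h4

/-- The expansion of the product of zero divisors. -/
lemma expansion_aux {A B : Type*} [CommRing A] [CommRing B] (φ ψ : A →+* B)
    (m r : ℕ) (hrm : r ≤ m) (R : A) (V : Fin r → A)
    (h1 : ∀ j, V j ^ 2 = R * V j)
    (h2 : ∀ (T : Finset (Fin r)) (e : ℕ), m < e + T.card →
      R ^ e * ∏ j ∈ T, V j = 0)
    (h3 : ∀ T : Finset (Fin r), T ≠ Finset.univ →
      R ^ (m - T.card) * ∏ j ∈ T, V j = 0) :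
    (φ R - ψ R) ^ (2 * m - 2 * r) * ∏ j, (φ (V j) - ψ (V j)) ^ 2 =
      ((-1) ^ (m - r) * ((2 * m - 2 * r).choose (m - r) : B) * (-2) ^ r) *
        (φ (R ^ (m - r) * ∏ j, V j) * ψ (R ^ (m - r) * ∏ j, V j)) := by
  have hvan : ∀ (T : Finset (Fin r)) (e : ℕ), m ≤ e + T.card →
      (T = Finset.univ → m < e + T.card) → R ^ e * ∏ j ∈ T, V j = 0 := by
    intro T e hle hT
    rcases hle.lt_or_eq with h | h
    · exact h2 T e h
    · have hne : T ≠ Finset.univ := fun hh => by have := hT hh; omega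
      have := h3 T hne
      rwa [show m - T.card = e by omega] at this
  let l : Fin r → Fin 3 → A := fun j k => (if k = 0 then R else 1) * (if k ≠ 2 then V j else 1)
  let q : Fin r → Fin 3 → A := fun j k => (if k = 2 then R else 1) * (if k ≠ 0 then V j else 1)
  let w : Fin 3 → B := fun k => if k = 1 then -2 else 1
  have hsq : ∀ j, (φ (V j) - ψ (V j)) ^ 2 = ∑ k : Fin 3, w k * (φ (l j k) * ψ (q j k)) := by
    intro j
    have e1 : φ (V j) ^ 2 = φ R * φ (V j) := by rw [← map_pow, h1, map_mul]
    have e2 : ψ (V j) ^ 2 = ψ R * ψ (V j) := by rw [← map_pow, h1, map_mul]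
    simp [Fin.sum_univ_three, l, q, w]
    linear_combination e1 + e2
  have hl : ∀ c : Fin r → Fin 3, ∏ j, l j (c j) =
      R ^ (Finset.univ.filter fun j => c j = 0).card *
        ∏ j ∈ Finset.univ.filter (fun j => c j ≠ 2), V j := by
    intro c
    simp only [l]
    rw [Finset.prod_mul_distrib, ← Finset.prod_filter, ← Finset.prod_filter, Finset.prod_const]
  have hq : ∀ c : Fin r → Fin 3, ∏ j, q j (c j) =
      R ^ (Finset.univ.filter fun j => c j = 2).card *
        ∏ j ∈ Finset.univ.filter (fun j => c j ≠ 0), V j := by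
    intro c
    simp only [q]
    rw [Finset.prod_mul_distrib, ← Finset.prod_filter, ← Finset.prod_filter, Finset.prod_const]
  have hprod : ∏ j, (φ (V j) - ψ (V j)) ^ 2 = ∑ c : Fin r → Fin 3,
      (∏ j, w (c j)) * (φ (∏ j, l j (c j)) * ψ (∏ j, q j (c j))) := by
    simp_rw [hsq]
    rw [Finset.prod_univ_sum, Fintype.piFinset_univ]
    simp_rw [map_prod, Finset.prod_mul_distrib]
  have hterm : ∀ (i : ℕ) (c : Fin r → Fin 3), i ≤ 2 * m - 2 * r →
      ¬ (i = m - r ∧ c = fun _ => 1) →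
      φ (R ^ i * ∏ j, l j (c j)) * ψ (R ^ (2 * m - 2 * r - i) * ∏ j, q j (c j)) = 0 := by
    intro i c hi hne
    have c0 := Finset.card_filter_add_card_filter_not (s := (Finset.univ : Finset (Fin r)))
      (fun j => c j = 0)
    have c2 := Finset.card_filter_add_card_filter_not (s := (Finset.univ : Finset (Fin r)))
      (fun j => c j = 2)
    rw [Finset.card_univ, Fintype.card_fin] at c0 c2
    rw [hl, hq, ← mul_assoc, ← mul_assoc, ← pow_add, ← pow_add]
    by_contra hcon
    have hL : ¬ (R ^ (i + (Finset.univ.filter fun j => c j = 0).card) *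
        ∏ j ∈ Finset.univ.filter (fun j => c j ≠ 2), V j = 0) := by
      intro h; rw [h] at hcon; simp at hcon
    have hQ : ¬ (R ^ (2 * m - 2 * r - i + (Finset.univ.filter fun j => c j = 2).card) *
        ∏ j ∈ Finset.univ.filter (fun j => c j ≠ 0), V j = 0) := by
      intro h; rw [h] at hcon; simp at hcon
    have hL1 := mt (h2 _ _) hL
    have hQ1 := mt (h2 _ _) hQ
    simp only [ne_eq] at hL1 hQ1 hL hQ
    have hLu : (Finset.univ.filter fun j => ¬ c j = 2) = Finset.univ := by
      by_contra hh
      exact hL (hvan _ _ (by omega) (fun h => absurd h hh))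
    have hQu : (Finset.univ.filter fun j => ¬ c j = 0) = Finset.univ := by
      by_contra hh
      exact hQ (hvan _ _ (by omega) (fun h => absurd h hh))
    have k2 := congrArg Finset.card hLu
    have k0 := congrArg Finset.card hQu
    rw [Finset.card_univ, Fintype.card_fin] at k0 k2
    apply hne
    refine ⟨by omega, ?_⟩
    funext j
    have a2 : ¬ c j = 2 := by
      have := Finset.mem_univ j
      rw [← hLu] at this
      simpa using this
    have a0 : ¬ c j = 0 := by
      have := Finset.mem_univ j
      rw [← hQu] at this
      simpa using this
    generalize c j = k at a0 a2
    fin_cases k <;> simp_all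
  rw [sub_pow, hprod, Finset.sum_mul_sum]
  have hrw : ∀ (i : ℕ) (c : Fin r → Fin 3),
      (-1) ^ (i + (2 * m - 2 * r)) * φ R ^ i * ψ R ^ (2 * m - 2 * r - i) *
        ((2 * m - 2 * r).choose i : B) *
        ((∏ j, w (c j)) * (φ (∏ j, l j (c j)) * ψ (∏ j, q j (c j)))) =
      (-1) ^ (i + (2 * m - 2 * r)) * ((2 * m - 2 * r).choose i : B) * (∏ j, w (c j)) *
        (φ (R ^ i * ∏ j, l j (c j)) * ψ (R ^ (2 * m - 2 * r - i) * ∏ j, q j (c j))) := by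
    intro i c
    rw [map_mul φ, map_mul ψ, map_pow, map_pow]
    ring
  simp_rw [hrw]
  rw [Finset.sum_eq_single (m - r), Finset.sum_eq_single (fun _ => 1)]
  · rw [show 2 * m - 2 * r - (m - r) = m - r by omega,
      show m - r + (2 * m - 2 * r) = (m - r) + 2 * (m - r) by omega, pow_add, pow_mul]
    simp [l, q, w]
  · intro c _ hc
    rw [hterm _ _ (by omega) (fun h => hc h.2), mul_zero]
  · simp
  · intro i hi hne
    refine Finset.sum_eq_zero fun c _ => ?_
    rw [hterm _ _ (by simp at hi; omega) (fun h => hne h.1), mul_zero]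
  · intro h
    exact absurd (Finset.mem_range.2 (by omega)) h


/-- Let `A` be a commutative ring whose additive group is torsion-free,
`m ≥ r ≥ 0`, and `R, V 1, …, V r ∈ A` satisfy (i) `V j ^ 2 = R * V j`, (ii) products
of total degree exceeding `m` vanish, (iii) `R ^ (m − |T|) * ∏_{j ∈ T} V j = 0` for
proper subsets `T`, and (iv) `R ^ (m − r) * V 1 ⋯ V r ≠ 0`. Then there are `2m`
elements `y i`, each equal to `R` or to some `V j` — namely `2m − 2r` copies of `R`
and two copies of each `V j` — with `∏ i (y i ⊗ 1 − 1 ⊗ y i) ≠ 0` in `A ⊗_ℤ A`. -/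
theorem exists_nonzero_zero_divisor_product (A : Type*) [CommRing A]
    (htf : ∀ (k : ℕ) (a : A), k ≠ 0 → (k : ℤ) • a = 0 → a = 0)
    (m r : ℕ) (hrm : r ≤ m) (R : A) (V : Fin r → A)
    (h1 : ∀ j, V j ^ 2 = R * V j)
    (h2 : ∀ (T : Finset (Fin r)) (e : ℕ), m < e + T.card →
      R ^ e * ∏ j ∈ T, V j = 0)
    (h3 : ∀ T : Finset (Fin r), T ≠ Finset.univ →
      R ^ (m - T.card) * ∏ j ∈ T, V j = 0)
    (h4 : R ^ (m - r) * ∏ j, V j ≠ 0) :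
    ∃ y : Fin (2 * m) → A,
      (∀ i, y i = R ∨ ∃ j, y i = V j) ∧
      (Finset.univ.val.map y =
        Multiset.replicate (2 * m - 2 * r) R +
          (Finset.univ.val : Multiset (Fin r)).bind fun j => Multiset.replicate 2 (V j)) ∧
      ∏ i, (y i ⊗ₜ[ℤ] (1 : A) - (1 : A) ⊗ₜ[ℤ] y i) ≠ 0 := by
  have hat : IsAddTorsionFree A := by
    constructor
    intro n hn a b hab
    have := htf n (a-b) hn (by simpa [sub_eq_zero, smul_sub] using hab)
    exact sub_eq_zero.1 this
  have hmt : Module.IsTorsionFree ℤ A :=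
    Module.isTorsionFree_int_iff_isAddTorsionFree.2 hat
  obtain ⟨M, hM⟩ : ∃ M : Multiset A, M = Multiset.replicate (2 * m - 2 * r) R +
      (Finset.univ.val : Multiset (Fin r)).bind fun j => Multiset.replicate 2 (V j) := ⟨_, rfl⟩
  have hcard : M.toList.length = 2 * m := by
    rw [Multiset.length_toList, hM]
    simp [Multiset.card_bind]
    omega
  have hy : Finset.univ.val.map (fun i : Fin (2 * m) => M.toList.get (i.cast hcard.symm)) = M := by
    rw [Fin.univ_val_map]
    conv_rhs => rw [← Multiset.coe_toList M]
    congr 1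
    apply List.ext_get
    · simp [hcard]
    · intro n _ _
      simp
  refine ⟨fun i => M.toList.get (i.cast hcard.symm), ?_, ?_, ?_⟩
  · intro i
    have hmem : M.toList.get (i.cast hcard.symm) ∈ M :=
      Multiset.mem_toList.1 (List.get_mem _ _)
    beta_reduce
    generalize M.toList.get (i.cast hcard.symm) = a at hmem ⊢
    rw [hM, Multiset.mem_add, Multiset.mem_bind] at hmem
    rcases hmem with h | ⟨j, _, h⟩
    · exact Or.inl (Multiset.eq_of_mem_replicate h)
    · exact Or.inr ⟨j, Multiset.eq_of_mem_replicate h⟩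
  · rw [hy, hM]
  · have hp : ∏ i : Fin (2 * m), (M.toList.get (i.cast hcard.symm) ⊗ₜ[ℤ] (1 : A) -
        (1 : A) ⊗ₜ[ℤ] M.toList.get (i.cast hcard.symm)) =
        (M.map fun a => a ⊗ₜ[ℤ] (1 : A) - (1 : A) ⊗ₜ[ℤ] a).prod := by
      conv_rhs => rw [← hy]
      rw [Multiset.map_map]
      rfl
    rw [hp, hM, Multiset.map_add, Multiset.prod_add, Multiset.map_replicate,
      Multiset.prod_replicate, Multiset.map_bind, Multiset.prod_bind]
    simp only [Multiset.map_replicate, Multiset.prod_replicate]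
    have hexp := expansion_aux
      (Algebra.TensorProduct.includeLeftRingHom : A →+* A ⊗[ℤ] A)
      ((Algebra.TensorProduct.includeRight : A →ₐ[ℤ] A ⊗[ℤ] A) : A →+* A ⊗[ℤ] A)
      m r hrm R V h1 h2 h3
    simp only [Algebra.TensorProduct.includeLeftRingHom_apply, RingHom.coe_coe,
      Algebra.TensorProduct.includeRight_apply, Algebra.TensorProduct.tmul_mul_tmul,
      mul_one, one_mul] at hexp
    change (R ⊗ₜ[ℤ] (1 : A) - (1 : A) ⊗ₜ[ℤ] R) ^ (2 * m - 2 * r) *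
      ∏ j, (V j ⊗ₜ[ℤ] (1 : A) - (1 : A) ⊗ₜ[ℤ] V j) ^ 2 ≠ 0
    rw [hexp]
    set x := R ^ (m - r) * ∏ j, V j with hx
    have hk : ((-1) ^ (m - r) * ((2 * m - 2 * r).choose (m - r) : ℤ) * (-2) ^ r) ≠ 0 := by
      have : (2 * m - 2 * r).choose (m - r) ≠ 0 := (Nat.choose_pos (by omega)).ne'
      simp [this]
    have hne := tmul_ne_zero_aux A _ x (smul_ne_zero hk h4) h4
    rw [← TensorProduct.smul_tmul', zsmul_eq_mul] at hne
    push_cast at hne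
    exact hne
end
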